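/- arXiv:1210.1564 — 2 statements merged into one kernel-verified Lean document; each statement's English description precedes it below -/
import Mathlib

section
/- Let p be an odd prime, G a finite group, S a Sylow p-subgroup of G, and H a subgroup with S ≤ H ≤ G. Suppose that for all elementary abelian subgroups A, B ≤ S and every g ∈ G with gAg⁻¹ ≤ B, there exists h ∈ H with hxh⁻¹ = gxg⁻¹ for all x ∈ A. Then H controls p-fusion in G: for all subgroups P, Q ≤ S and every g ∈ G with gPg⁻¹ ≤ Q there exists h ∈ H with hxh⁻¹ = gxg⁻¹ for all x ∈ P. -/
/-!
The proof is by induction from large `p`-subgroups `P ≤ H` to small ones. Conjugating a Sylow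
subgroup of `N_G(P)` into `H` and applying the induction hypothesis to normalizers reduces the
fusion of `P` to the case where `g` normalizes `P` and `H` contains a Sylow subgroup `T` of
`N_G(P)`.

Oddness of `p` enters as follows: if `A` is a maximal elementary abelian normal subgroup of `P`,
every `y ∈ N_G(P)` of order prime to `p` that centralizes `A` also centralizes `P`. Indeed, if such
a `y` acts nontrivially on a normal `p`-subgroup, choose a normal subgroup `D` of it minimal subject
to not being centralized by `y`. Then `D` has class at most two with central `p`-th powers fixed by
`y`, so for odd `p` the map `x ↦ x ^ p` is an endomorphism of `D` that kills every `⁅x, y⁆`, and by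
minimality `D` has exponent `p`. Inside `C_P(A)` such a `D` lies in `A`, which `y` centralizes.
After conjugating `A` inside `N_G(P)`, it follows that `N_G(P) ∩ C_G(A) ≤ T C_G(P)`.

Now let `h ∈ H` agree with `g` on `A`, so that `P` and its conjugate by `h` both lie in
`P (H ∩ C_G(gAg⁻¹))`. Sylow's theorem there gives `c ∈ H ∩ C_G(gAg⁻¹)` and a `p`-subgroup `U`
containing `P` and `chP(ch)⁻¹`. If `U = P`, then `ch` normalizes `P` and `g⁻¹ch ∈ T C_G(P)`, so `g`
acts on `P` like an element of `H`. If `U > P`, then `V = N_U(P)` is strictly larger than `P`, and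
`g⁻¹Vg ≤ T C_G(P)`, so for some `d ∈ C_G(P)` the element `d g⁻¹` conjugates `V` into `T ≤ H`; the
induction hypothesis for `V` then realizes `g⁻¹`, and hence `g`, on `P`.
-/

open Pointwise
open scoped commutatorElement

section Commutators

variable {G : Type*} [Group G]

theorem commutator_pow_eq_one {x y : G} {n : ℕ} (hc : Commute ⁅x, y⁆ y) (hn : Commute x (y ^ n)) :
    ⁅x, y⁆ ^ n = 1 := by
  have hconj : x * y * x⁻¹ = ⁅x, y⁆ * y := by simp [commutatorElement_def]
  have hpow : x * y ^ n * x⁻¹ = ⁅x, y⁆ ^ n * y ^ n := by rw [← conj_pow, hconj, hc.mul_pow]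
  simpa [hn.eq] using hpow

theorem commute_of_commutator_of_coprime {x y : G} (hc : Commute ⁅x, y⁆ y)
    (hco : (orderOf ⁅x, y⁆).Coprime (orderOf y)) : Commute x y := by
  have hpow : ⁅x, y⁆ ^ orderOf y = 1 :=
    commutator_pow_eq_one hc (pow_orderOf_eq_one y ▸ Commute.one_right x)
  have hone : ⁅x, y⁆ = 1 :=
    orderOf_eq_one_iff.mp (Nat.eq_one_of_dvd_coprimes hco dvd_rfl (orderOf_dvd_of_pow_eq_one hpow))
  exact commutatorElement_eq_one_iff_commute.mp hone

theorem pow_mul_eq_mul_pow_mul_commutator_pow {x y : G} (hx : Commute ⁅y, x⁆ x)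
    (hy : Commute ⁅y, x⁆ y) (n : ℕ) : y ^ n * x = x * y ^ n * ⁅y, x⁆ ^ n := by
  have hconj : x⁻¹ * y * x⁻¹⁻¹ = y * ⁅y, x⁆ := by
    rw [← hy.eq, ← mul_right_inj x, ← mul_assoc x ⁅y, x⁆, ← hx.eq, commutatorElement_def]
    group
  have hpow : x⁻¹ * y ^ n * x⁻¹⁻¹ = y ^ n * ⁅y, x⁆ ^ n := by
    rw [← conj_pow, hconj, hy.symm.mul_pow]
  rw [mul_assoc x, ← hpow]
  group

theorem mul_pow_of_commute_commutator {x y : G} (hx : Commute ⁅y, x⁆ x) (hy : Commute ⁅y, x⁆ y)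
    (n : ℕ) : (x * y) ^ n = x ^ n * y ^ n * ⁅y, x⁆ ^ n.choose 2 := by
  induction n with
  | zero => simp
  | succ n ih =>
    have hcomm : Commute (⁅y, x⁆ ^ n.choose 2) (x * y) := (hx.mul_right hy).pow_left _
    have hchoose : (n + 1).choose 2 = n + n.choose 2 := by
      rw [Nat.choose_succ_succ' n 1, Nat.choose_one_right]
    calc (x * y) ^ (n + 1)
        = x ^ n * (y ^ n * x) * (y * ⁅y, x⁆ ^ n.choose 2) := by
          rw [pow_succ, ih, mul_assoc, hcomm.eq]; simp only [mul_assoc]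
      _ = x ^ n * x * y ^ n * (⁅y, x⁆ ^ n * y) * ⁅y, x⁆ ^ n.choose 2 := by
          rw [pow_mul_eq_mul_pow_mul_commutator_pow hx hy]; simp only [mul_assoc]
      _ = x ^ (n + 1) * y ^ (n + 1) * ⁅y, x⁆ ^ (n + 1).choose 2 := by
          rw [(hy.pow_left n).eq, pow_succ x, pow_succ y, hchoose, pow_add]; simp only [mul_assoc]

theorem mul_pow_of_odd {x y : G} {n : ℕ} (hn : Odd n) (hx : Commute ⁅y, x⁆ x)
    (hy : Commute ⁅y, x⁆ y) (hpow : ⁅y, x⁆ ^ n = 1) : (x * y) ^ n = x ^ n * y ^ n := by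
  have hdvd : n ∣ n.choose 2 := by
    obtain ⟨m, rfl⟩ := hn
    exact ⟨m, by rw [Nat.choose_two_right, Nat.add_sub_cancel, ← mul_assoc, mul_comm _ 2, mul_assoc,
      Nat.mul_div_cancel_left _ two_pos]⟩
  obtain ⟨m, hm⟩ := hdvd
  rw [mul_pow_of_commute_commutator hx hy, hm, pow_mul, hpow, one_pow, mul_one]

end Commutators

section Frattini

variable {P : Type*} [Group P] [Finite P]

theorem frattini_lt_top [Nontrivial P] : frattini P < ⊤ :=
  lt_top_iff_ne_top.mpr fun h =>
    bot_ne_top (frattini_nongenerating (K := ⊥) (by rw [h, sup_top_eq]))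

variable {p : ℕ} [Fact p.Prime]

theorem normal_of_isCoatom_of_isPGroup (hP : IsPGroup p P) {M : Subgroup P} (hM : IsCoatom M) :
    M.Normal :=
  have := hP.isNilpotent
  Subgroup.NormalizerCondition.normal_of_coatom M Group.normalizerCondition_of_isNilpotent hM

theorem index_eq_of_isCoatom (hP : IsPGroup p P) {M : Subgroup P} (hM : IsCoatom M) :
    M.index = p := by
  obtain ⟨m, hm⟩ := IsPGroup.iff_card.mp hP
  obtain ⟨n, hn⟩ := IsPGroup.iff_card.mp (hP.to_subgroup M)
  have hlt : p ^ n < p ^ m := by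
    rw [← hn, ← hm]
    exact (Subgroup.card_le_card_group M).lt_of_ne fun h => hM.1 (Subgroup.eq_top_of_card_eq M h)
  have hnm : n < m := (Nat.pow_lt_pow_iff_right (Fact.out : p.Prime).one_lt).mp hlt
  obtain ⟨K, hK, hMK⟩ := Sylow.exists_subgroup_card_pow_succ (hm ▸ pow_dvd_pow p hnm) hn
  have hne : M ≠ K := by
    rintro rfl
    exact (Nat.pow_lt_pow_succ (Fact.out : p.Prime).one_lt).ne (hn.symm.trans hK)
  have hcard : Nat.card P = p ^ n * p := by
    rw [← Subgroup.card_top, ← hM.2 K (hMK.lt_of_ne hne), hK, pow_succ]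
  refine Nat.eq_of_mul_eq_mul_left (pow_pos (Fact.out : p.Prime).pos n) ?_
  rw [← hcard, ← hn, M.card_mul_index]

theorem pow_mem_frattini (hP : IsPGroup p P) (x : P) : x ^ p ∈ frattini P := by
  simp only [frattini, Order.radical, Subgroup.mem_iInf]
  intro M hM
  have := normal_of_isCoatom_of_isPGroup hP hM
  exact index_eq_of_isCoatom hP hM ▸ M.pow_index_mem x

theorem commutator_le_frattini (hP : IsPGroup p P) : commutator P ≤ frattini P := by
  simp only [frattini, Order.radical, le_iInf_iff]
  intro M hM
  have := normal_of_isCoatom_of_isPGroup hP hM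
  have : IsCyclic (P ⧸ M) := isCyclic_of_prime_card (index_eq_of_isCoatom hP hM)
  exact Subgroup.Normal.quotient_commutative_iff_commutator_le.mp inferInstance

theorem exists_normal_lt_forall_pow_mem_commutator_mem {G : Type*} [Group G] [Finite G]
    {D : Subgroup G} [D.Normal] (hD : IsPGroup p D) (hne : D ≠ ⊥) :
    ∃ F : Subgroup G, F.Normal ∧ F < D ∧ (∀ x ∈ D, x ^ p ∈ F) ∧ ∀ x ∈ D, ∀ z ∈ D, ⁅x, z⁆ ∈ F := by
  have : Nontrivial D := (Subgroup.nontrivial_iff_ne_bot D).mpr hne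
  refine ⟨(frattini D).map D.subtype, inferInstance, ?_,
    fun x hx => ⟨_, pow_mem_frattini hD ⟨x, hx⟩, rfl⟩,
    fun x hx z hz => ⟨⁅⟨x, hx⟩, ⟨z, hz⟩⁆, commutator_le_frattini hD
      (Subgroup.commutator_mem_commutator (Subgroup.mem_top _) (Subgroup.mem_top _)), rfl⟩⟩
  simpa [← MonoidHom.range_eq_map] using
    (Subgroup.map_lt_map_iff_of_injective D.subtype_injective).mpr (frattini_lt_top (P := D))

end Frattini

section Coprime

variable {p : ℕ} {G : Type*} [Group G]

theorem commute_of_commutator_mem {Z : Subgroup G} (hZ : IsPGroup p Z) {x y : G}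
    (hy : p.Coprime (orderOf y)) (hZy : Z ≤ Subgroup.centralizer {y}) (hxy : ⁅x, y⁆ ∈ Z) :
    Commute x y := by
  refine commute_of_commutator_of_coprime
    (Subgroup.mem_centralizer_singleton_iff.mp (hZy hxy)) ?_
  simpa using hZ.orderOf_coprime hy ⟨⁅x, y⁆, hxy⟩

/-- `D` is a minimal element among the normal subgroups that `y` does not centralize. -/
def IsMinimalNotCentralized (y : G) (D : Subgroup G) : Prop :=
  Minimal (fun X : Subgroup G => X.Normal ∧ ¬ X ≤ Subgroup.centralizer {y}) D

namespace IsMinimalNotCentralized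

variable {y : G} {D E : Subgroup G}

theorem le_centralizer_of_lt (hD : IsMinimalNotCentralized y D) (hE : E.Normal) (hED : E < D) :
    E ≤ Subgroup.centralizer {y} :=
  not_not.mp fun h => hD.not_prop_of_lt hED ⟨hE, h⟩

theorem eq_of_forall_commutator_mem (hD : IsMinimalNotCentralized y D) (hDp : IsPGroup p D)
    (hy : p.Coprime (orderOf y)) (hE : E.Normal) (hED : E ≤ D) (hcomm : ∀ x ∈ D, ⁅x, y⁆ ∈ E) :
    E = D := by
  by_contra hne
  have hEy := hD.le_centralizer_of_lt hE (hED.lt_of_ne hne)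
  exact hD.prop.2 fun x hx => Subgroup.mem_centralizer_singleton_iff.mpr
    (commute_of_commutator_mem (hDp.to_le hED) hy hEy (hcomm x hx))

theorem le_centralizer (hD : IsMinimalNotCentralized y D) (hDp : IsPGroup p D)
    (hy : p.Coprime (orderOf y)) (hE : E.Normal) (hED : E < D) : D ≤ Subgroup.centralizer E := by
  have := hD.prop.1
  have hyE : y ∈ Subgroup.centralizer (E : Set G) := fun e he =>
    Subgroup.mem_centralizer_singleton_iff.mp (hD.le_centralizer_of_lt hE hED he)
  refine inf_eq_left.mp (hD.eq_of_forall_commutator_mem hDp hy inferInstance inf_le_left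
    fun x hx => ?_)
  exact Subgroup.commutator_le_inf D _ (Subgroup.commutator_mem_commutator hx hyE)

variable [Fact p.Prime] [Finite G]

theorem mul_pow_and_commute_pow (hD : IsMinimalNotCentralized y D) (hDp : IsPGroup p D)
    (hp : Odd p) (hy : p.Coprime (orderOf y)) :
    (∀ x ∈ D, ∀ z ∈ D, (x * z) ^ p = x ^ p * z ^ p) ∧ ∀ x ∈ D, Commute y (x ^ p) := by
  have := hD.prop.1
  obtain ⟨F, hF, hFD, hpow, hcomm⟩ :=
    exists_normal_lt_forall_pow_mem_commutator_mem hDp fun h => hD.prop.2 (h ▸ bot_le)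
  have hcentral : ∀ f ∈ F, ∀ x ∈ D, Commute f x := fun f hf x hx =>
    hD.le_centralizer hDp hy hF hFD hx f hf
  refine ⟨fun x hx z hz => ?_, fun x hx => .symm (Subgroup.mem_centralizer_singleton_iff.mp
    (hD.le_centralizer_of_lt hF hFD (hpow x hx)))⟩
  have hc := hcentral _ (hcomm z hz x hx)
  exact mul_pow_of_odd hp (hc x hx) (hc z hz)
    (commutator_pow_eq_one (hc x hx) (hcentral _ (hpow x hx) z hz).symm)

theorem pow_eq_one (hD : IsMinimalNotCentralized y D) (hDp : IsPGroup p D)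
    (hp : Odd p) (hy : p.Coprime (orderOf y)) : ∀ x ∈ D, x ^ p = 1 := by
  have := hD.prop.1
  obtain ⟨hmul, hfix⟩ := hD.mul_pow_and_commute_pow hDp hp hy
  let Ω : Subgroup G :=
    { carrier := {x | x ∈ D ∧ x ^ p = 1}
      one_mem' := ⟨D.one_mem, one_pow p⟩
      mul_mem' := fun {x z} hx hz =>
        ⟨D.mul_mem hx.1 hz.1, by rw [hmul x hx.1 z hz.1, hx.2, hz.2, one_mul]⟩
      inv_mem' := fun {x} hx => ⟨D.inv_mem hx.1, by rw [inv_pow, hx.2, inv_one]⟩ }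
  have hΩ : Ω.Normal := ⟨fun x hx g =>
    ⟨‹D.Normal›.conj_mem x hx.1 g, by rw [conj_pow, hx.2, mul_one, mul_inv_cancel]⟩⟩
  have hcomm : ∀ x ∈ D, ⁅x, y⁆ ∈ Ω := fun x hx => by
    have hyx : y * x⁻¹ * y⁻¹ ∈ D := ‹D.Normal›.conj_mem _ (D.inv_mem hx) y
    have hxy : ⁅x, y⁆ = x * (y * x⁻¹ * y⁻¹) := by simp only [commutatorElement_def, mul_assoc]
    refine ⟨hxy ▸ D.mul_mem hx hyx, ?_⟩
    rw [hxy, hmul x hx _ hyx, conj_pow, (hfix _ (D.inv_mem hx)).eq, mul_inv_cancel_right, inv_pow,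
      mul_inv_cancel]
  have hΩD : Ω = D := hD.eq_of_forall_commutator_mem hDp hy hΩ (fun x hx => hx.1) hcomm
  exact fun x hx => (hΩD ▸ hx : x ∈ Ω).2

end IsMinimalNotCentralized

theorem le_centralizer_of_forall_normal_exponent [Fact p.Prime] (hp : Odd p) [Finite G]
    {Q : Subgroup G} [Q.Normal] (hQ : IsPGroup p Q) {y : G} (hy : p.Coprime (orderOf y))
    (h : ∀ D : Subgroup G, D.Normal → D ≤ Q → (∀ x ∈ D, x ^ p = 1) →
      D ≤ Subgroup.centralizer {y}) : Q ≤ Subgroup.centralizer {y} := by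
  by_contra hQy
  obtain ⟨D, hDQ, hD : IsMinimalNotCentralized y D⟩ :=
    exists_minimal_le_of_wellFoundedLT
      (fun X : Subgroup G => X.Normal ∧ ¬ X ≤ Subgroup.centralizer {y}) Q ⟨‹_›, hQy⟩
  exact hD.prop.2 (h D hD.prop.1 hDQ (hD.pow_eq_one (hQ.to_le hDQ) hp hy))

theorem le_centralizer_of_forall_le_normalizer_exponent [Fact p.Prime] (hp : Odd p) [Finite G]
    {K Q : Subgroup G} (hQK : Q ≤ K) (hKQ : K ≤ Subgroup.normalizer Q) (hQ : IsPGroup p Q) {y : G}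
    (hyK : y ∈ K) (hy : p.Coprime (orderOf y))
    (h : ∀ D ≤ Q, K ≤ Subgroup.normalizer D → (∀ x ∈ D, x ^ p = 1) →
      D ≤ Subgroup.centralizer {y}) : Q ≤ Subgroup.centralizer {y} := by
  have : (Q.subgroupOf K).Normal := (Subgroup.normal_subgroupOf_iff_le_normalizer hQK).mpr hKQ
  have hQy : Q.subgroupOf K ≤ Subgroup.centralizer {(⟨y, hyK⟩ : K)} := by
    refine le_centralizer_of_forall_normal_exponent hp (Q := Q.subgroupOf K) hQ.comap_subtype
      (by rwa [Subgroup.orderOf_mk]) fun D hD hDQ hDp x hx => ?_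
    have hKD : K ≤ Subgroup.normalizer (D.map K.subtype) := by
      simpa [Subgroup.normalizer_eq_top, ← MonoidHom.range_eq_map] using
        Subgroup.le_normalizer_map (H := D) K.subtype
    have hDy := h (D.map K.subtype) (Subgroup.map_le_iff_le_comap.mpr hDQ) hKD
      (by rintro _ ⟨z, hz, rfl⟩; exact congrArg K.subtype (hDp z hz))
    have hxy := Subgroup.mem_centralizer_singleton_iff.mp (hDy (Subgroup.mem_map_of_mem _ hx))
    exact Subgroup.mem_centralizer_singleton_iff.mpr (Subtype.ext hxy)
  exact fun x hx => Subgroup.mem_centralizer_singleton_iff.mpr <| congrArg K.subtype <|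
    Subgroup.mem_centralizer_singleton_iff.mp (hQy (x := ⟨x, hQK hx⟩) hx)

end Coprime

section ElementaryAbelian

variable {G : Type*} [Group G] {p : ℕ}

/-- `A` is an elementary abelian `p`-subgroup of `G`; the trivial subgroup is allowed. -/
def IsElementaryAbelian (p : ℕ) (A : Subgroup G) : Prop :=
  (∀ x ∈ A, ∀ y ∈ A, Commute x y) ∧ ∀ x ∈ A, x ^ p = 1

theorem isElementaryAbelian_closure {s : Set G} (hcomm : ∀ x ∈ s, ∀ y ∈ s, Commute x y)
    (hpow : ∀ x ∈ s, x ^ p = 1) : IsElementaryAbelian p (Subgroup.closure s) := by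
  have := Subgroup.isMulCommutative_closure hcomm
  refine ⟨fun x hx y hy => setLike_mul_comm hx hy, fun x hx => ?_⟩
  induction hx using Subgroup.closure_induction with
  | mem x hx => exact hpow x hx
  | one => exact one_pow p
  | mul x y hx hy ihx ihy =>
    rw [Commute.mul_pow (setLike_mul_comm hx hy), ihx, ihy, one_mul]
  | inv x _ ih => rw [inv_pow, ih, inv_one]

namespace IsElementaryAbelian

variable {A : Subgroup G}

theorem isPGroup (hA : IsElementaryAbelian p A) : IsPGroup p A :=
  fun x => ⟨1, Subtype.ext (by simpa using hA.2 x x.2)⟩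

theorem conj_smul (hA : IsElementaryAbelian p A) (g : G) :
    IsElementaryAbelian p (MulAut.conj g • A) := by
  constructor
  · rintro _ ⟨x, hx, rfl⟩ _ ⟨y, hy, rfl⟩
    exact (hA.1 x hx y hy).map (MulAut.conj g).toMonoidHom
  · rintro _ ⟨x, hx, rfl⟩
    simpa using hA.2 x hx

theorem closure_insert (hA : IsElementaryAbelian p A) {x : G}
    (hx : x ∈ Subgroup.centralizer (A : Set G)) (hxp : x ^ p = 1) :
    IsElementaryAbelian p (Subgroup.closure (insert x (A : Set G))) := by
  refine isElementaryAbelian_closure ?_ ?_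
  · rintro y (rfl | hy) z (rfl | hz)
    · exact Commute.refl _
    · exact (hx z hz).symm
    · exact hx y hy
    · exact hA.1 y hy z hz
  · rintro y (rfl | hy)
    exacts [hxp, hA.2 y hy]

end IsElementaryAbelian

end ElementaryAbelian

section MaximalNormalElementaryAbelian

variable {G : Type*} [Group G] {p : ℕ} {P A D : Subgroup G}

theorem exists_mem_notMem_forall_commutator_mem [Group.IsNilpotent P] (hDP : D ≤ P)
    (hPD : P ≤ Subgroup.normalizer D) (h : ¬ D ≤ A) :
    ∃ x ∈ D, x ∉ A ∧ ∀ y ∈ P, ⁅x, y⁆ ∈ A := by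
  classical
  have hex : ∃ n, D ⊓ P.lowerCentralSeries n ≤ A := by
    obtain ⟨n, hn⟩ := P.isNilpotent_iff_lowerCentralSeries.mp ‹_›
    exact ⟨n, by simp [hn]⟩
  obtain ⟨n, hn⟩ : ∃ n, Nat.find hex = n + 1 := Nat.exists_eq_succ_of_ne_zero fun h0 => h <| by
    simpa [h0, inf_eq_left.mpr hDP] using Nat.find_spec hex
  obtain ⟨x, hx, hxA⟩ := SetLike.not_le_iff_exists.mp (Nat.find_min hex (m := n) (by omega))
  refine ⟨x, hx.1, hxA, fun y hy => Nat.find_spec hex ⟨?_, ?_⟩⟩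
  · exact Subgroup.le_normalizer_iff_commutator_le_left.mp hPD
      (Subgroup.commutator_mem_commutator hx.1 hy)
  · rw [hn]
    exact Subgroup.commutator_mem_commutator hx.2 hy

/-- `A` is maximal among the elementary abelian `p`-subgroups of `P` that `P` normalizes. -/
def IsMaximalNormalElementaryAbelian (p : ℕ) (P A : Subgroup G) : Prop :=
  Maximal (fun X => X ≤ P ∧ P ≤ Subgroup.normalizer X ∧ IsElementaryAbelian p X) A

theorem exists_isMaximalNormalElementaryAbelian [Finite G] (p : ℕ) (P : Subgroup G) :
    ∃ A, IsMaximalNormalElementaryAbelian p P A := by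
  obtain ⟨A, -, hA⟩ := exists_maximal_ge_of_wellFoundedGT
    (fun X => X ≤ P ∧ P ≤ Subgroup.normalizer X ∧ IsElementaryAbelian p X) ⊥
    ⟨bot_le, Subgroup.le_normalizer_of_normal, by simp [IsElementaryAbelian]⟩
  exact ⟨A, hA⟩

theorem normalizer_le_normalizer_centralizer (A : Subgroup G) :
    Subgroup.normalizer (A : Set G) ≤
      Subgroup.normalizer (Subgroup.centralizer (A : Set G) : Set G) :=
  Subgroup.le_normalizer_of_normal_subgroupOf (Subgroup.centralizer_le_normalizer _)

namespace IsMaximalNormalElementaryAbelian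

theorem le_of_le_centralizer [Group.IsNilpotent P] (hA : IsMaximalNormalElementaryAbelian p P A)
    (hDP : D ≤ P) (hPD : P ≤ Subgroup.normalizer D) (hDA : D ≤ Subgroup.centralizer A)
    (hD : ∀ x ∈ D, x ^ p = 1) : D ≤ A := by
  by_contra h
  obtain ⟨x, hxD, hxA, hx⟩ := exists_mem_notMem_forall_commutator_mem hDP hPD h
  obtain ⟨hAP, hPA, hAe⟩ := hA.prop
  let B : Subgroup G := Subgroup.closure (insert x (A : Set G))
  have hAB : A ≤ B := fun a ha => Subgroup.subset_closure (Or.inr ha)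
  have hxB : x ∈ B := Subgroup.subset_closure (Or.inl rfl)
  have hBP : B ≤ P := (Subgroup.closure_le P).mpr (Set.insert_subset (hDP hxD) hAP)
  have hPB : P ≤ Subgroup.normalizer B := by
    refine Subgroup.le_normalizer_closure_iff.mpr ?_
    rintro y hy z (rfl | hz)
    · have hyx : y * z * y⁻¹ = ⁅z, y⁆⁻¹ * z := by rw [commutatorElement_def]; group
      exact hyx ▸ B.mul_mem (B.inv_mem (hAB (hx y hy))) hxB
    · exact hAB (Subgroup.le_normalizer_iff.mp hPA y hy z hz)
  exact hxA (hA.le_of_ge ⟨hBP, hPB, hAe.closure_insert (hDA hxD) (hD x hxD)⟩ hAB hxB)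

variable [Fact p.Prime] [Finite G] {y : G}

theorem mem_centralizer_of_coprime (hA : IsMaximalNormalElementaryAbelian p P A) (hp : Odd p)
    (hP : IsPGroup p P) (hyP : y ∈ Subgroup.normalizer (P : Set G))
    (hyA : y ∈ Subgroup.centralizer (A : Set G)) (hy : p.Coprime (orderOf y)) :
    y ∈ Subgroup.centralizer (P : Set G) := by
  have := hP.isNilpotent
  have hPA : P ≤ Subgroup.normalizer A := hA.prop.2.1
  have hQ : P ⊓ Subgroup.centralizer A ≤ Subgroup.centralizer {y} := by
    refine le_centralizer_of_forall_le_normalizer_exponent hp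
      (K := Subgroup.normalizer P ⊓ Subgroup.normalizer A)
      (inf_le_inf P.le_normalizer (Subgroup.centralizer_le_normalizer _))
      ((inf_le_inf_left _ (normalizer_le_normalizer_centralizer A)).trans
        Subgroup.inf_normalizer_le_normalizer_inf)
      hP.to_inf_left ⟨hyP, Subgroup.centralizer_le_normalizer _ hyA⟩ hy fun D hD hKD hDp => ?_
    have hDA : D ≤ A := hA.le_of_le_centralizer (hD.trans inf_le_left)
      ((le_inf P.le_normalizer hPA).trans hKD) (hD.trans inf_le_right) hDp
    exact fun d hd => Subgroup.mem_centralizer_singleton_iff.mpr (hyA d (hDA hd))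
  refine fun x hx => commute_of_commutator_mem hP.to_inf_left hy hQ ⟨?_, ?_⟩
  · exact Subgroup.le_normalizer_iff_commutator_le_left.mp le_rfl
      (Subgroup.commutator_mem_commutator hx hyP)
  · exact Subgroup.le_normalizer_iff_commutator_le_right.mp (normalizer_le_normalizer_centralizer A)
      (Subgroup.commutator_mem_commutator (hPA hx) hyA)

theorem exists_pow_mem_centralizer (hA : IsMaximalNormalElementaryAbelian p P A) (hp : Odd p)
    (hP : IsPGroup p P) (hyP : y ∈ Subgroup.normalizer (P : Set G))
    (hyA : y ∈ Subgroup.centralizer (A : Set G)) :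
    ∃ k, y ^ p ^ k ∈ Subgroup.centralizer (P : Set G) := by
  refine ⟨(orderOf y).factorization p, hA.mem_centralizer_of_coprime hp hP
    (pow_mem hyP _) (pow_mem hyA _) ?_⟩
  rw [orderOf_pow_of_dvd (pow_ne_zero _ (Fact.out : p.Prime).ne_zero) (Nat.ordProj_dvd _ _)]
  exact Nat.coprime_ordCompl Fact.out (orderOf_pos y).ne'

end IsMaximalNormalElementaryAbelian

end MaximalNormalElementaryAbelian

section Conjugates

variable {G : Type*} [Group G] {A C H P Q : Subgroup G}

theorem conj_smul_le_iff {g : G} : MulAut.conj g • P ≤ Q ↔ ∀ x ∈ P, g * x * g⁻¹ ∈ Q :=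
  Set.image_subset_iff

theorem conj_smul_normalizer (g : G) (A : Subgroup G) :
    MulAut.conj g • Subgroup.normalizer (A : Set G) =
      Subgroup.normalizer ((MulAut.conj g • A : Subgroup G) : Set G) :=
  Subgroup.map_equiv_normalizer_eq A (MulAut.conj g)

theorem conj_smul_centralizer (g : G) (A : Subgroup G) :
    MulAut.conj g • Subgroup.centralizer (A : Set G) =
      Subgroup.centralizer ((MulAut.conj g • A : Subgroup G) : Set G) := by
  have hle (k : G) (B : Subgroup G) : MulAut.conj k • Subgroup.centralizer (B : Set G) ≤
      Subgroup.centralizer ((MulAut.conj k • B : Subgroup G) : Set G) :=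
    Subgroup.map_centralizer_le_centralizer_image _ _
  refine le_antisymm (hle g A) ?_
  rw [Subgroup.subset_pointwise_smul_iff, ← map_inv]
  simpa only [map_inv, inv_smul_smul] using hle g⁻¹ (MulAut.conj g • A)

theorem conj_smul_eq_of_mem_normalizer {g : G} (hg : g ∈ Subgroup.normalizer (P : Set G)) :
    MulAut.conj g • P = P :=
  Subgroup.mem_normalizer_iff_map_conj_eq.mp hg

theorem inf_sup_le_sup_inf_of_le_normalizer (hPQ : P ≤ Q) (hPC : P ≤ Subgroup.normalizer C) :
    Q ⊓ (P ⊔ C) ≤ P ⊔ Q ⊓ C := by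
  rintro y ⟨hyQ, hy : y ∈ P ⊔ C⟩
  rw [← SetLike.mem_coe, Subgroup.coe_mul_of_left_le_normalizer_right P C hPC] at hy
  obtain ⟨x, hx, c, hc, rfl⟩ := hy
  exact Subgroup.mul_mem_sup hx ⟨(Q.mul_mem_cancel_left (hPQ hx)).mp hyQ, hc⟩

theorem conj_smul_le_sup_inf_centralizer {g h : G} (hPH : P ≤ H) (hPA : P ≤ Subgroup.normalizer A)
    (hg : g ∈ Subgroup.normalizer (P : Set G)) (hh : h ∈ H)
    (hhg : h * g⁻¹ ∈ Subgroup.centralizer (A : Set G)) :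
    MulAut.conj h • P ≤ P ⊔ H ⊓ Subgroup.centralizer A := by
  refine le_trans (le_inf ?_ ?_) (inf_sup_le_sup_inf_of_le_normalizer hPH
    (hPA.trans (normalizer_le_normalizer_centralizer A)))
  · exact Subgroup.conj_smul_le_of_le hPH ⟨h, hh⟩
  · calc MulAut.conj h • P = MulAut.conj (h * g⁻¹) • P := by
          rw [map_mul, mul_smul, conj_smul_eq_of_mem_normalizer (inv_mem hg)]
      _ ≤ P ⊔ Subgroup.centralizer A :=
          Subgroup.conj_smul_le_of_le le_sup_left
            ⟨_, Subgroup.mem_sup_right hhg⟩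

theorem lt_inf_normalizer_of_isPGroup {p : ℕ} [Fact p.Prime] [Finite G] (hQ : IsPGroup p Q)
    (h : P < Q) : P < Q ⊓ Subgroup.normalizer P := by
  have := hQ.isNilpotent
  refine lt_of_le_of_ne (le_inf h.le P.le_normalizer) fun heq => h.not_ge ?_
  rw [← Subgroup.subgroupOf_eq_top]
  refine normalizerCondition_iff_only_full_group_self_normalizing.mp
    Group.normalizerCondition_of_isNilpotent _ ?_
  rw [← Subgroup.subgroupOf_normalizer_eq h.le, ← Subgroup.inf_subgroupOf_left, ← heq]

end Conjugates

section SylowOf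

variable {G : Type*} [Group G] {p : ℕ} {C M N T X : Subgroup G}

/-- `T` is a Sylow `p`-subgroup of the subgroup `M`. Unlike `Sylow p M`, this keeps `T` a subgroup
of the ambient group, so that subgroups of different `M` can be compared. -/
def IsSylowOf (p : ℕ) (M T : Subgroup G) : Prop :=
  Maximal (fun X : Subgroup G => X ≤ M ∧ IsPGroup p X) T

theorem exists_isSylowOf_ge [Finite G] (hXM : X ≤ M) (hX : IsPGroup p X) :
    ∃ T, X ≤ T ∧ IsSylowOf p M T :=
  exists_maximal_ge_of_wellFoundedGT _ X ⟨hXM, hX⟩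

theorem isSylowOf_of_sylow (S : Sylow p G) (hSM : (S : Subgroup G) ≤ M) : IsSylowOf p M S :=
  ⟨⟨hSM, S.isPGroup'⟩, fun _ hX hSX => (S.is_maximal' hX.2 hSX).le⟩

namespace IsSylowOf

theorem conj_smul (hT : IsSylowOf p M T) (g : G) :
    IsSylowOf p (MulAut.conj g • M) (MulAut.conj g • T) := by
  refine ⟨⟨Subgroup.pointwise_smul_le_pointwise_smul_iff.mpr hT.prop.1, hT.prop.2.map _⟩, ?_⟩
  intro X hX hTX
  rw [Subgroup.subset_pointwise_smul_iff, ← map_inv]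
  refine hT.le_of_ge ⟨?_, hX.2.map _⟩ ?_
  · rw [map_inv, ← Subgroup.subset_pointwise_smul_iff]
    exact hX.1
  · rwa [map_inv, ← Subgroup.pointwise_smul_subset_iff]

theorem exists_sylow (hT : IsSylowOf p M T) :
    ∃ S : Sylow p M, (S : Subgroup M).map M.subtype = T := by
  obtain ⟨hTM, hTp⟩ := hT.prop
  have hmap : (T.subgroupOf M).map M.subtype = T := Subgroup.map_subgroupOf_eq_of_le hTM
  refine ⟨⟨T.subgroupOf M, hTp.comap_subtype, fun {X} hX hTX => le_antisymm ?_ hTX⟩, hmap⟩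
  refine Subgroup.map_le_iff_le_comap.mp (hT.le_of_ge ⟨Subgroup.map_subtype_le X, hX.map _⟩ ?_)
  exact hmap.ge.trans (Subgroup.map_mono hTX)

variable [Fact p.Prime] [Finite G]

theorem exists_conj_smul_le (hT : IsSylowOf p M T) (hXM : X ≤ M) (hX : IsPGroup p X) :
    ∃ m ∈ M, MulAut.conj m • X ≤ T := by
  obtain ⟨S, rfl⟩ := hT.exists_sylow
  obtain ⟨S', hXS'⟩ := (hX.comap_subtype (K := M)).exists_le_sylow
  obtain ⟨m, rfl⟩ := MulAction.exists_smul_eq M S' S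
  refine ⟨m, m.2, ?_⟩
  rintro _ ⟨x, hx, rfl⟩
  exact ⟨m * ⟨x, hXM hx⟩ * m⁻¹, ⟨⟨x, hXM hx⟩, hXS' hx, rfl⟩, rfl⟩

theorem le_sup_of_forall_pow_mem (hT : IsSylowOf p M T) (hMC : M ≤ Subgroup.normalizer C)
    (hpow : ∀ y ∈ M, ∃ k, y ^ p ^ k ∈ C) : M ≤ T ⊔ C := by
  obtain ⟨S, rfl⟩ := hT.exists_sylow
  have := Subgroup.normal_subgroupOf_of_le_normalizer hMC
  have hquot : IsPGroup p (M ⧸ C.subgroupOf M) := by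
    refine fun y => QuotientGroup.induction_on y fun y => ?_
    obtain ⟨k, hk⟩ := hpow y y.2
    exact ⟨k, (QuotientGroup.eq_one_iff _).mpr hk⟩
  have hsurj := QuotientGroup.mk'_surjective (C.subgroupOf M)
  have htop : (S : Subgroup M).map (QuotientGroup.mk' (C.subgroupOf M)) = ⊤ := by
    rw [← Sylow.coe_mapSurjective hsurj]
    exact ((S.mapSurjective hsurj).is_maximal' (hquot.to_subgroup ⊤) le_top).symm
  have hsup : (S : Subgroup M) ⊔ C.subgroupOf M = ⊤ := by
    simpa [Subgroup.comap_map_eq] using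
      congrArg (Subgroup.comap (QuotientGroup.mk' (C.subgroupOf M))) htop
  calc M = ((S : Subgroup M) ⊔ C.subgroupOf M).map M.subtype := by
        rw [hsup, ← MonoidHom.range_eq_map, M.range_subtype]
    _ ≤ (S : Subgroup M).map M.subtype ⊔ C := by
        rw [Subgroup.map_sup]
        exact sup_le_sup_left (Subgroup.map_comap_le _ _) _

end IsSylowOf

theorem exists_isSylowOf_sup_conj_smul_le [Fact p.Prime] [Finite G] (hN : IsPGroup p N)
    (hNC : N ≤ Subgroup.normalizer C) (hXNC : X ≤ N ⊔ C) (hX : IsPGroup p X) :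
    ∃ T, IsSylowOf p (N ⊔ C) T ∧ N ≤ T ∧ ∃ c ∈ C, MulAut.conj c • X ≤ T := by
  obtain ⟨T, hNT, hT⟩ := exists_isSylowOf_ge (le_sup_left : N ≤ N ⊔ C) hN
  obtain ⟨m, hm, hmX⟩ := hT.exists_conj_smul_le hXNC hX
  rw [← SetLike.mem_coe, Subgroup.coe_mul_of_left_le_normalizer_right N C hNC] at hm
  obtain ⟨n, hn, c, hc, rfl⟩ := hm
  refine ⟨T, hT, hNT, c, hc, ?_⟩
  rwa [map_mul, mul_smul, Subgroup.pointwise_smul_subset_iff, ← map_inv,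
    Subgroup.conj_smul_eq_self_of_mem (inv_mem (hNT hn))] at hmX

end SylowOf

section NormalizerFactorization

variable {G : Type*} [Group G] {p : ℕ} [Fact p.Prime] [Finite G] {P T : Subgroup G}

theorem le_of_isSylowOf_normalizer (hT : IsSylowOf p (Subgroup.normalizer P) T)
    (hP : IsPGroup p P) : P ≤ T := by
  obtain ⟨m, hm, hmT⟩ := hT.exists_conj_smul_le P.le_normalizer hP
  rwa [conj_smul_eq_of_mem_normalizer hm] at hmT

theorem exists_isElementaryAbelian_inf_centralizer_le_sup (hp : Odd p) (hP : IsPGroup p P)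
    (hT : IsSylowOf p (Subgroup.normalizer P) T) :
    ∃ A ≤ P, P ≤ Subgroup.normalizer A ∧ IsElementaryAbelian p A ∧
      Subgroup.normalizer P ⊓ Subgroup.centralizer A ≤ T ⊔ Subgroup.centralizer P := by
  obtain ⟨A, hA⟩ := exists_isMaximalNormalElementaryAbelian p P
  obtain ⟨hAP, hPA, hAe⟩ := hA.prop
  obtain ⟨T₀, -, hT₀⟩ := exists_isSylowOf_ge (p := p)
    (bot_le : ⊥ ≤ Subgroup.normalizer (P : Set G) ⊓ Subgroup.centralizer A) IsPGroup.of_bot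
  have hle : Subgroup.normalizer (P : Set G) ⊓ Subgroup.centralizer A ≤
      T₀ ⊔ Subgroup.centralizer P :=
    hT₀.le_sup_of_forall_pow_mem
      (inf_le_left.trans (normalizer_le_normalizer_centralizer P))
      fun y hy => hA.exists_pow_mem_centralizer hp hP hy.1 hy.2
  obtain ⟨m, hm, hmT⟩ := hT.exists_conj_smul_le (hT₀.prop.1.trans inf_le_left) hT₀.prop.2
  have hmP := conj_smul_eq_of_mem_normalizer hm
  have hmono {X Y : Subgroup G} (h : X ≤ Y) : MulAut.conj m • X ≤ MulAut.conj m • Y :=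
    Subgroup.pointwise_smul_le_pointwise_smul_iff.mpr h
  refine ⟨MulAut.conj m • A, ?_, ?_, hAe.conj_smul m, ?_⟩
  · simpa only [hmP] using hmono hAP
  · simpa only [hmP, conj_smul_normalizer] using hmono hPA
  · have hconj := hmono hle
    simp only [Subgroup.smul_inf, Subgroup.smul_sup, conj_smul_normalizer, conj_smul_centralizer,
      hmP] at hconj
    exact hconj.trans (sup_le_sup_right hmT _)

end NormalizerFactorization

section ConjRealizedIn

variable {G : Type*} [Group G] {H P Q T : Subgroup G} {g k : G}

/-- Conjugation by `g` on the subgroup `P` agrees with conjugation by some element of `H`. -/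
def ConjRealizedIn (H P : Subgroup G) (g : G) : Prop :=
  ∃ h ∈ H, ∀ x ∈ P, h * x * h⁻¹ = g * x * g⁻¹

theorem conjRealizedIn_of_mem (hg : g ∈ H) : ConjRealizedIn H P g :=
  ⟨g, hg, fun _ _ => rfl⟩

theorem conjRealizedIn_of_mem_centralizer (hg : g ∈ Subgroup.centralizer (P : Set G)) :
    ConjRealizedIn H P g :=
  ⟨1, H.one_mem, fun x hx => by simp [← hg x hx]⟩

namespace ConjRealizedIn

theorem mono (hg : ConjRealizedIn H Q g) (hPQ : P ≤ Q) : ConjRealizedIn H P g :=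
  let ⟨h, hh, hhg⟩ := hg
  ⟨h, hh, fun x hx => hhg x (hPQ hx)⟩

theorem mul (hk : ConjRealizedIn H (MulAut.conj g • P) k) (hg : ConjRealizedIn H P g) :
    ConjRealizedIn H P (k * g) := by
  obtain ⟨i, hi, hik⟩ := hk
  obtain ⟨h, hh, hhg⟩ := hg
  refine ⟨i * h, H.mul_mem hi hh, fun x hx => ?_⟩
  calc i * h * x * (i * h)⁻¹ = i * (h * x * h⁻¹) * i⁻¹ := by group
    _ = i * (g * x * g⁻¹) * i⁻¹ := by rw [hhg x hx]
    _ = k * (g * x * g⁻¹) * k⁻¹ := hik _ ⟨x, hx, rfl⟩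
    _ = k * g * x * (k * g)⁻¹ := by group

theorem of_mul (hk : ConjRealizedIn H (MulAut.conj g • P) k) (hkg : ConjRealizedIn H P (k * g)) :
    ConjRealizedIn H P g := by
  obtain ⟨i, hi, hik⟩ := hk
  obtain ⟨h, hh, hhkg⟩ := hkg
  refine ⟨i⁻¹ * h, H.mul_mem (H.inv_mem hi) hh, fun x hx => ?_⟩
  calc i⁻¹ * h * x * (i⁻¹ * h)⁻¹ = i⁻¹ * (h * x * h⁻¹) * i := by group
    _ = i⁻¹ * (k * g * x * (k * g)⁻¹) * i := by rw [hhkg x hx]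
    _ = i⁻¹ * (k * (g * x * g⁻¹) * k⁻¹) * i := by group
    _ = i⁻¹ * (i * (g * x * g⁻¹) * i⁻¹) * i := by rw [hik (g * x * g⁻¹) ⟨x, hx, rfl⟩]
    _ = g * x * g⁻¹ := by group

end ConjRealizedIn

theorem conjRealizedIn_of_mem_sup_centralizer (hTH : T ≤ H) (hTP : T ≤ Subgroup.normalizer P)
    (hg : g ∈ T ⊔ Subgroup.centralizer (P : Set G)) : ConjRealizedIn H P g := by
  rw [← SetLike.mem_coe, Subgroup.coe_mul_of_left_le_normalizer_right _ _
    (hTP.trans (normalizer_le_normalizer_centralizer P))] at hg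
  obtain ⟨t, ht, c, hc, rfl⟩ := hg
  exact (conjRealizedIn_of_mem (hTH ht)).mul (conjRealizedIn_of_mem_centralizer hc)

theorem mul_inv_mem_centralizer_conj_smul (h : ∀ x ∈ P, k * x * k⁻¹ = g * x * g⁻¹) :
    k * g⁻¹ ∈ Subgroup.centralizer ((MulAut.conj g • P : Subgroup G) : Set G) := by
  rintro _ ⟨x, hx, rfl⟩
  calc g * x * g⁻¹ * (k * g⁻¹) = k * x * k⁻¹ * (k * g⁻¹) := by rw [h x hx]
    _ = k * g⁻¹ * (g * x * g⁻¹) := by group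

end ConjRealizedIn

section FusionStep

variable {G : Type*} [Group G] {p : ℕ} {H P Q R T U A : Subgroup G} {g k b : G}

theorem conjRealizedIn_of_mul_inv_mem_centralizer (hTH : T ≤ H) (hTP : T ≤ Subgroup.normalizer P)
    (hA : Subgroup.normalizer P ⊓ Subgroup.centralizer A ≤ T ⊔ Subgroup.centralizer P)
    (hg : g ∈ Subgroup.normalizer (P : Set G)) (hkH : k ∈ H)
    (hkP : k ∈ Subgroup.normalizer (P : Set G))
    (hkg : k * g⁻¹ ∈ Subgroup.centralizer ((MulAut.conj g • A : Subgroup G) : Set G)) :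
    ConjRealizedIn H P g := by
  rw [← conj_smul_centralizer, Subgroup.mem_pointwise_smul_iff_inv_smul_mem, ← map_inv] at hkg
  have hgk : g⁻¹ * k ∈ T ⊔ Subgroup.centralizer P :=
    hA ⟨Subgroup.mul_mem _ (Subgroup.inv_mem _ hg) hkP, by simpa [mul_assoc] using hkg⟩
  simpa using (conjRealizedIn_of_mem hkH).mul
    (conjRealizedIn_of_mem_sup_centralizer hTH hTP (Subgroup.inv_mem _ hgk))

/-- All fusion between `p`-subgroups of `H` is realized in `H` when its source properly contains
`P`. This is the induction hypothesis in an induction from large `p`-subgroups to small ones. -/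
def RealizesFusionAbove (p : ℕ) (H P : Subgroup G) : Prop :=
  ∀ L, P < L → L ≤ H → IsPGroup p L → ∀ k : G, MulAut.conj k • L ≤ H → ConjRealizedIn H L k

variable [Fact p.Prime] [Finite G]

theorem mem_normalizer_of_conj_smul_le (h : MulAut.conj g • P ≤ P) :
    g ∈ Subgroup.normalizer (P : Set G) :=
  Subgroup.mem_normalizer_fintype (conj_smul_le_iff.mp h)

theorem conjRealizedIn_of_lt_of_le_sup_centralizer (hT : IsSylowOf p (Subgroup.normalizer P) T)
    (hTH : T ≤ H) (hPT : P ≤ T) (hPA : P ≤ Subgroup.normalizer A)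
    (hA : Subgroup.normalizer P ⊓ Subgroup.centralizer A ≤ T ⊔ Subgroup.centralizer P)
    (ih : RealizesFusionAbove p H P) (hg : g ∈ Subgroup.normalizer (P : Set G)) (hPU : P < U)
    (hUH : U ≤ H) (hU : IsPGroup p U)
    (hUA : U ≤ P ⊔ Subgroup.centralizer ((MulAut.conj g • A : Subgroup G) : Set G)) :
    ConjRealizedIn H P g := by
  let V := U ⊓ Subgroup.normalizer P
  have hPV : P < V := lt_inf_normalizer_of_isPGroup hU hPU
  have hVT : MulAut.conj g⁻¹ • V ≤ T ⊔ Subgroup.centralizer P := calc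
    MulAut.conj g⁻¹ • V ≤ Subgroup.normalizer P ⊓ (P ⊔ Subgroup.centralizer A) := by
      rw [map_inv, ← Subgroup.subset_pointwise_smul_iff, Subgroup.smul_inf, Subgroup.smul_sup,
        conj_smul_normalizer, conj_smul_centralizer, conj_smul_eq_of_mem_normalizer hg]
      exact le_inf inf_le_right (inf_le_left.trans hUA)
    _ ≤ P ⊔ Subgroup.normalizer P ⊓ Subgroup.centralizer A :=
      inf_sup_le_sup_inf_of_le_normalizer P.le_normalizer
        (hPA.trans (normalizer_le_normalizer_centralizer A))
    _ ≤ T ⊔ Subgroup.centralizer P := sup_le (hPT.trans le_sup_left) hA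
  have hTC : T ⊔ Subgroup.centralizer P ≤ Subgroup.normalizer P :=
    sup_le hT.prop.1 (Subgroup.centralizer_le_normalizer _)
  obtain ⟨W, hW, hTW, c, hc, hcW⟩ := exists_isSylowOf_sup_conj_smul_le hT.prop.2
    (hT.prop.1.trans (normalizer_le_normalizer_centralizer P)) hVT (hU.to_inf_left.map _)
  have hWT : W ≤ T := hT.le_of_ge ⟨hW.prop.1.trans hTC, hW.prop.2⟩ hTW
  have hcg : ConjRealizedIn H P (c * g⁻¹) := by
    refine (ih V hPV (inf_le_left.trans hUH) hU.to_inf_left _ ?_).mono hPV.le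
    rw [map_mul, mul_smul]
    exact hcW.trans (hWT.trans hTH)
  rw [← conj_smul_eq_of_mem_normalizer hg] at hcg
  exact hcg.of_mul (by simpa using conjRealizedIn_of_mem_centralizer hc)

theorem conjRealizedIn_of_mem_normalizer (hp : Odd p) (hP : IsPGroup p P)
    (hT : IsSylowOf p (Subgroup.normalizer P) T) (hTH : T ≤ H)
    (hel : ∀ A ≤ H, IsElementaryAbelian p A → ∀ k : G, MulAut.conj k • A ≤ H →
      ConjRealizedIn H A k)
    (ih : RealizesFusionAbove p H P) (hg : g ∈ Subgroup.normalizer (P : Set G)) :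
    ConjRealizedIn H P g := by
  obtain ⟨A, hAP, hPA, hAe, hA⟩ := exists_isElementaryAbelian_inf_centralizer_le_sup hp hP hT
  have hPT := le_of_isSylowOf_normalizer hT hP
  have hPH := hPT.trans hTH
  have hPg := conj_smul_eq_of_mem_normalizer hg
  have hgmono {X Y : Subgroup G} (h : X ≤ Y) : MulAut.conj g • X ≤ MulAut.conj g • Y :=
    Subgroup.pointwise_smul_le_pointwise_smul_iff.mpr h
  have hgAP : MulAut.conj g • A ≤ P := (hgmono hAP).trans hPg.le
  have hPgA : P ≤ Subgroup.normalizer ((MulAut.conj g • A : Subgroup G) : Set G) := by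
    simpa only [hPg, conj_smul_normalizer] using hgmono hPA
  obtain ⟨h, hh, hhg⟩ := hel A (hAP.trans hPH) hAe g (hgAP.trans hPH)
  have hhgA := mul_inv_mem_centralizer_conj_smul hhg
  have hPC : P ≤ Subgroup.normalizer (H ⊓ Subgroup.centralizer
      ((MulAut.conj g • A : Subgroup G) : Set G) : Subgroup G) :=
    (le_inf (hPH.trans H.le_normalizer) (hPgA.trans (normalizer_le_normalizer_centralizer _))).trans
      Subgroup.inf_normalizer_le_normalizer_inf
  obtain ⟨U, hU, hPU, c, hc, hcU⟩ := exists_isSylowOf_sup_conj_smul_le hP hPC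
    (conj_smul_le_sup_inf_centralizer hPH hPgA hg hh hhgA) (hP.map _)
  rw [← mul_smul, ← map_mul] at hcU
  obtain rfl | hPU := hPU.eq_or_lt
  · exact conjRealizedIn_of_mul_inv_mem_centralizer hTH hT.prop.1 hA hg
      (mul_mem hc.1 hh) (mem_normalizer_of_conj_smul_le hcU)
      (by simpa only [mul_assoc] using Subgroup.mul_mem _ hc.2 hhgA)
  · exact conjRealizedIn_of_lt_of_le_sup_centralizer hT hTH hPT hPA hA ih hg hPU
      (hU.prop.1.trans (sup_le hPH inf_le_left)) hU.prop.2
      (hU.prop.1.trans (sup_le_sup_left inf_le_right _))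

theorem exists_mem_normalizer_conjRealizedIn_mul (hQ : IsPGroup p Q) (hQH : Q ≤ H)
    (ih : RealizesFusionAbove p H Q) (hbQ : MulAut.conj b • Q = R) (hRH : R ≤ H)
    (hT : IsSylowOf p (Subgroup.normalizer R) T) (hTH : T ≤ H) :
    ∃ m ∈ Subgroup.normalizer (R : Set G), ConjRealizedIn H Q (m * b) := by
  subst hbQ
  obtain ⟨L, hQL, hL⟩ := exists_isSylowOf_ge hQH hQ
  obtain rfl | hQL := hQL.eq_or_lt
  · obtain ⟨h, hh, hhQ⟩ := hL.exists_conj_smul_le hRH (hQ.map _)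
    have hmem : h * b ∈ Subgroup.normalizer (Q : Set G) :=
      mem_normalizer_of_conj_smul_le (by rwa [map_mul, mul_smul])
    refine ⟨h⁻¹ * b⁻¹, ?_, conjRealizedIn_of_mem (by simpa using H.inv_mem hh)⟩
    rw [← conj_smul_normalizer, Subgroup.mem_pointwise_smul_iff_inv_smul_mem]
    simpa [← map_inv, mul_assoc] using inv_mem hmem
  · have hV : IsPGroup p (L ⊓ Subgroup.normalizer (Q : Set G) : Subgroup G) :=
      hL.prop.2.to_inf_left
    have hbV : MulAut.conj b • (L ⊓ Subgroup.normalizer (Q : Set G)) ≤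
        Subgroup.normalizer ((MulAut.conj b • Q : Subgroup G) : Set G) := by
      rw [Subgroup.smul_inf, conj_smul_normalizer]
      exact inf_le_right
    obtain ⟨m, hm, hmT⟩ := hT.exists_conj_smul_le hbV (hV.map _)
    have hQV := lt_inf_normalizer_of_isPGroup hL.prop.2 hQL
    refine ⟨m, hm, (ih _ hQV (inf_le_left.trans hL.prop.1) hV _ ?_).mono hQV.le⟩
    rw [map_mul, mul_smul]
    exact hmT.trans hTH

end FusionStep

section ControlOfFusion

variable {G : Type*} [Group G] [Finite G] {p : ℕ} [Fact p.Prime] {S : Sylow p G} {H P : Subgroup G}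
  {g : G}

theorem conjRealizedIn_of_forall_isElementaryAbelian (hp : Odd p) (hSH : (S : Subgroup G) ≤ H)
    (hel : ∀ A ≤ H, IsElementaryAbelian p A → ∀ k : G, MulAut.conj k • A ≤ H →
      ConjRealizedIn H A k)
    (hP : IsPGroup p P) (hPH : P ≤ H) (hgP : MulAut.conj g • P ≤ H) :
    ConjRealizedIn H P g := by
  induction hn : P.index using Nat.strong_induction_on generalizing P g with
  | h n ih =>
  have ih' (Q : Subgroup G) (hQ : Q.index = P.index) : RealizesFusionAbove p H Q :=
    fun L hL hLH hLp k hk => ih _ (hn ▸ hQ ▸ Subgroup.index_strictAnti hL) hLp hLH hk rfl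
  obtain ⟨T, hPT, hT⟩ := exists_isSylowOf_ge P.le_normalizer hP
  obtain ⟨a, -, ha⟩ := (isSylowOf_of_sylow S le_top).exists_conj_smul_le le_top hT.prop.2
  have haTH := ha.trans hSH
  have haPH : MulAut.conj a • P ≤ H :=
    (Subgroup.pointwise_smul_le_pointwise_smul_iff.mpr hPT).trans haTH
  have haT := conj_smul_normalizer a P ▸ hT.conj_smul a
  have hag : MulAut.conj (a * g⁻¹) • MulAut.conj g • P = MulAut.conj a • P := by
    rw [← mul_smul, ← map_mul, inv_mul_cancel_right]
  obtain ⟨m, hm, hmP⟩ :=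
    exists_mem_normalizer_conjRealizedIn_mul hP hPH (ih' P rfl) rfl haPH haT haTH
  obtain ⟨k, hk, hkP⟩ := exists_mem_normalizer_conjRealizedIn_mul (hP.map _) hgP
    (ih' _ (Subgroup.index_map_equiv P (MulAut.conj g))) hag haPH haT haTH
  have hkm : ConjRealizedIn H (MulAut.conj (m * a) • P) (k * m⁻¹) := by
    rw [map_mul, mul_smul, conj_smul_eq_of_mem_normalizer hm]
    exact conjRealizedIn_of_mem_normalizer hp (hP.map _) haT haTH hel
      (ih' _ (Subgroup.index_map_equiv P (MulAut.conj a))) (mul_mem hk (inv_mem hm))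
  exact hkP.of_mul (by simpa [mul_assoc] using hkm.mul hmP)

theorem conjRealizedIn_of_forall_le_sylow (hSH : (S : Subgroup G) ≤ H) (hP : IsPGroup p P)
    (hPH : P ≤ H) (hgP : MulAut.conj g • P ≤ H)
    (hS : ∀ x : G, MulAut.conj x • P ≤ S → ∀ k : G, MulAut.conj k • MulAut.conj x • P ≤ S →
      ConjRealizedIn H (MulAut.conj x • P) k) : ConjRealizedIn H P g := by
  obtain ⟨x, hx, hxP⟩ := (isSylowOf_of_sylow S hSH).exists_conj_smul_le hPH hP
  obtain ⟨y, hy, hyP⟩ := (isSylowOf_of_sylow S hSH).exists_conj_smul_le hgP (hP.map _)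
  have hconj : MulAut.conj (y * g * x⁻¹) • MulAut.conj x • P =
      MulAut.conj y • MulAut.conj g • P := by
    simp only [← mul_smul, ← map_mul, inv_mul_cancel_right]
  have hyg := (hS x hxP _ (hconj ▸ hyP)).mul (conjRealizedIn_of_mem hx)
  rw [inv_mul_cancel_right] at hyg
  exact (conjRealizedIn_of_mem hy).of_mul hyg

end ControlOfFusion

/-- **Control of p-fusion detected on elementary abelian subgroups, p odd.**
If `H` contains a Sylow `p`-subgroup `S` of the finite group `G` (`p` odd) and the
`G`-fusion on elementary abelian subgroups of `S` is realized in `H`, then `H`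
controls `p`-fusion in `G`. -/
theorem elementary_abelian_control_fusion
    (p : ℕ) [Fact p.Prime] (hp : Odd p)
    (G : Type) [Group G] [Finite G] (S : Sylow p G) (H : Subgroup G)
    (hSH : (S : Subgroup G) ≤ H)
    (hyp : ∀ A B : Subgroup G, A ≤ (S : Subgroup G) → B ≤ (S : Subgroup G) →
      (∀ x ∈ A, ∀ y ∈ A, x * y = y * x) → (∀ x ∈ A, x ^ p = 1) →
      (∀ x ∈ B, ∀ y ∈ B, x * y = y * x) → (∀ x ∈ B, x ^ p = 1) →
      ∀ g : G, (∀ x ∈ A, g * x * g⁻¹ ∈ B) →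
        ∃ h ∈ H, ∀ x ∈ A, h * x * h⁻¹ = g * x * g⁻¹) :
    ∀ P Q : Subgroup G, P ≤ (S : Subgroup G) → Q ≤ (S : Subgroup G) →
      ∀ g : G, (∀ x ∈ P, g * x * g⁻¹ ∈ Q) →
        ∃ h ∈ H, ∀ x ∈ P, h * x * h⁻¹ = g * x * g⁻¹ := by
  intro P Q hPS hQS g hPQ
  have hel : ∀ A ≤ H, IsElementaryAbelian p A → ∀ k : G, MulAut.conj k • A ≤ H →
      ConjRealizedIn H A k := by
    refine fun A hAH hA k hkA =>
      conjRealizedIn_of_forall_le_sylow hSH hA.isPGroup hAH hkA fun x hxA k hkA => ?_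
    have hB := hA.conj_smul x
    have hC := hB.conj_smul k
    exact hyp _ _ hxA hkA hB.1 hB.2 hC.1 hC.2 k fun y hy => ⟨y, hy, rfl⟩
  exact conjRealizedIn_of_forall_isElementaryAbelian hp hSH hel (S.isPGroup'.to_le hPS)
    (hPS.trans hSH) (conj_smul_le_iff.mpr fun x hx => hSH (hQS (hPQ x hx)))
end

section
/- Let p be a prime, φ: H → G a homomorphism of finite groups, and n ≥ 1 a natural number with n ≥ min{rk_p(G), rk_p(H) + 1}. Suppose that for every finite abelian p-group A of rank exactly n, composition with φ induces a bijection Rep(A,H) → Rep(A,G). Then rk_p(G) = rk_p(H), and for every finite abelian p-group A (of arbitrary rank) composition with φ induces a bijection Rep(A,H) → Rep(A,G). -/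
/-- `Rep A G`: homomorphisms `A →* G` up to conjugation in `G`. -/
def GroupRep (A G : Type) [Group A] [Group G] : Type :=
  Quot (fun f f' : A →* G => ∃ g : G, ∀ a : A, f' a = g * f a * g⁻¹)

/-- The map `Rep A H → Rep A G` induced by composition with `φ : H →* G`. -/
def GroupRep.map {A H G : Type} [Group A] [Group H] [Group G] (φ : H →* G) :
    GroupRep A H → GroupRep A G :=
  Quot.map (fun f => φ.comp f)
    (by
      rintro f f' ⟨h, hh⟩
      exact ⟨φ h, fun a => by simp [MonoidHom.comp_apply, hh a, map_mul, map_inv]⟩)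

/-- The minimal number of generators of a group `A`. -/
noncomputable def genRank (A : Type) [Group A] : ℕ :=
  sInf {n : ℕ | ∃ s : Finset A, s.card = n ∧ Subgroup.closure (s : Set A) = ⊤}

/-- The `p`-rank of `G`: the largest `r` such that `G` has an elementary abelian
`p`-subgroup of order `p ^ r`. -/
noncomputable def pRank (p : ℕ) (G : Type) [Group G] : ℕ :=
  sSup {r : ℕ | ∃ E : Subgroup G, (∀ x ∈ E, ∀ y ∈ E, x * y = y * x) ∧
    (∀ x ∈ E, x ^ p = 1) ∧ Nat.card E = p ^ r}

/-!
The idea is that conjugate homomorphisms have the same kernel, so every class in `Rep A G` has a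
kernel.

If `A` has rank at most `n`, then `A × (ℤ/p)^k` has rank exactly `n` for a suitable `k`, and
`Rep A` is a retract of `Rep (A × (ℤ/p)^k)`; hence `φ` induces a bijection on `Rep A`. For cyclic
`A` this shows that `φ` kills no nontrivial `p`-element, so that it preserves kernels of classes;
consequently the class of an elementary abelian subgroup of `G` of rank at most `n` comes from a
subgroup of `H` of the same rank. The bound on `n` then forces all elementary abelian subgroups of
`G` to have rank at most `n`. Finally, a class in `Rep A G` with kernel `N` comes from the quotient
`A ⧸ N`, which embeds in `G` and so has rank at most `n`.
-/

open Function
open scoped IsMulCommutative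

section Rank

theorem genRank_eq_rank (A : Type) [Group A] [Group.FG A] : genRank A = Group.rank A := by
  obtain ⟨S, hcard, hS⟩ := Group.rank_spec A
  refine le_antisymm (Nat.sInf_le ⟨S, hcard, hS⟩) (le_csInf ⟨_, S, hcard, hS⟩ ?_)
  rintro _ ⟨T, rfl, hT⟩
  exact Group.rank_le hT

theorem rank_eq_of_surjective_of_ker_nongenerating {A B : Type*} [Group A] [Group B]
    [Group.FG A] [Group.FG B] (f : A →* B) (hf : Surjective f)
    (hker : ∀ K : Subgroup A, K ⊔ f.ker = ⊤ → K = ⊤) : Group.rank A = Group.rank B := by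
  classical
  refine le_antisymm ?_ (Group.rank_le_of_surjective f hf)
  obtain ⟨S, hcard, hS⟩ := Group.rank_spec B
  rw [← hcard]
  refine le_trans (Group.rank_le (S := S.image (surjInv hf)) (hker _ ?_)) Finset.card_image_le
  rw [← Subgroup.comap_map_eq, MonoidHom.map_closure, Finset.coe_image,
    (rightInverse_surjInv hf).image_image, hS, Subgroup.comap_top]

theorem rank_zpowers_le_one {G : Type*} [Group G] (g : G) [Group.FG (Subgroup.zpowers g)] :
    Group.rank (Subgroup.zpowers g) ≤ 1 := by
  have h : Subgroup.zpowers g = Subgroup.closure (({g} : Finset G) : Set G) := by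
    rw [Finset.coe_singleton, Subgroup.zpowers_eq_closure]
  rw [Subgroup.rank_congr h]
  exact Subgroup.rank_closure_finset_le_card {g}

theorem eq_top_of_sup_range_powMonoidHom_eq_top {p : ℕ} {A : Type*} [CommGroup A] [Finite A]
    (hA : IsPGroup p A) {K : Subgroup A} (hK : K ⊔ (powMonoidHom p : A →* A).range = ⊤) :
    K = ⊤ := by
  have hsurj : Surjective fun x : A ⧸ K ↦ x ^ p := by
    intro y
    obtain ⟨a, rfl⟩ := QuotientGroup.mk_surjective y
    obtain ⟨k, hk, _, ⟨c, rfl⟩, rfl⟩ := Subgroup.mem_sup.1 (hK ▸ Subgroup.mem_top a)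
    exact ⟨c, by simp [(QuotientGroup.eq_one_iff k).2 hk]⟩
  refine (Subgroup.eq_top_iff' K).2 fun a ↦ (QuotientGroup.eq_one_iff a).1 ?_
  obtain ⟨k, hk⟩ := hA.to_quotient K a
  apply (Finite.injective_iff_surjective.2 hsurj).iterate k
  simp only [pow_iterate, hk, one_pow]

theorem isPGroup_of_pow_eq_one {p : ℕ} {A : Type*} [Group A] (hA : ∀ a : A, a ^ p = 1) :
    IsPGroup p A :=
  fun a ↦ ⟨1, by rw [pow_one, hA]⟩

theorem isPGroup_prod {p : ℕ} {A B : Type*} [Group A] [Group B]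
    (hA : IsPGroup p A) (hB : IsPGroup p B) : IsPGroup p (A × B) := by
  rintro ⟨a, b⟩
  obtain ⟨k, hk⟩ := hA a
  obtain ⟨l, hl⟩ := hB b
  exact ⟨k + l, Prod.ext (by simp [pow_add, pow_mul, hk]) (by simp [pow_add, pow_mul', hl])⟩

variable {p : ℕ} [Fact p.Prime]

theorem card_eq_pow_rank {A : Type*} [CommGroup A] [Finite A] (hA : ∀ a : A, a ^ p = 1) :
    Nat.card A = p ^ Group.rank A := by
  classical
  have hp : p.Prime := Fact.out
  let : Module (ZMod p) (Additive A) := AddCommGroup.zmodModule (n := p) hA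
  let b := Module.finBasis (ZMod p) (Additive A)
  let S : Finset A := Finset.univ.image fun i ↦ (b i).toMul
  have hcard : Nat.card A = p ^ Module.finrank (ZMod p) (Additive A) := by
    rw [← Nat.card_congr Additive.toMul, Module.natCard_eq_pow_finrank (K := ZMod p),
      Nat.card_zmod]
  have hspan : ⊤ ≤
      AddSubgroup.toZModSubmodule p (Subgroup.toAddSubgroup (Subgroup.closure (S : Set A))) := by
    rw [← b.span_eq, Submodule.span_le]
    rintro _ ⟨i, rfl⟩
    change (b i).toMul ∈ Subgroup.closure (S : Set A)
    exact Subgroup.subset_closure (Finset.mem_image_of_mem _ (Finset.mem_univ i))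
  have hrank : Group.rank A ≤ Module.finrank (ZMod p) (Additive A) := calc
    Group.rank A ≤ S.card := Group.rank_le ((Subgroup.eq_top_iff' _).2 fun _ ↦ hspan trivial)
    _ ≤ Module.finrank (ZMod p) (Additive A) := by
      simpa [S] using Finset.card_image_le (s := .univ) (f := fun i ↦ (b i).toMul)
  exact le_antisymm (Nat.le_of_dvd (pow_pos hp.pos _) (card_dvd_exponent_pow_rank' A hA))
    (hcard ▸ Nat.pow_le_pow_right hp.pos hrank)

theorem card_ker_powMonoidHom_eq_pow_rank {A : Type*} [CommGroup A] [Finite A]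
    (hA : IsPGroup p A) : Nat.card (powMonoidHom p : A →* A).ker = p ^ Group.rank A := by
  let R := (powMonoidHom p : A →* A).range
  have hR : ∀ x : A ⧸ R, x ^ p = 1 := by
    intro x
    obtain ⟨a, rfl⟩ := QuotientGroup.mk_surjective x
    exact (QuotientGroup.eq_one_iff (a ^ p)).2 ⟨a, rfl⟩
  have hrank : Group.rank A = Group.rank (A ⧸ R) := by
    refine rank_eq_of_surjective_of_ker_nongenerating (QuotientGroup.mk' R)
      (QuotientGroup.mk'_surjective R) fun K hK ↦ ?_
    rw [QuotientGroup.ker_mk'] at hK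
    exact eq_top_of_sup_range_powMonoidHom_eq_top hA hK
  rw [hrank, ← card_eq_pow_rank hR]
  exact Subgroup.index_range.symm

theorem rank_prod_eq_add {A B : Type*} [CommGroup A] [CommGroup B] [Finite A] [Finite B]
    (hA : IsPGroup p A) (hB : IsPGroup p B) :
    Group.rank (A × B) = Group.rank A + Group.rank B := by
  apply Nat.pow_right_injective (Fact.out : p.Prime).two_le
  have hker : (powMonoidHom p : A × B →* A × B).ker =
      (powMonoidHom p : A →* A).ker.prod (powMonoidHom p : B →* B).ker := by
    ext; simp [Subgroup.mem_prod, MonoidHom.mem_ker, Prod.ext_iff]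
  simp only [← card_ker_powMonoidHom_eq_pow_rank (isPGroup_prod hA hB), hker, pow_add,
    ← card_ker_powMonoidHom_eq_pow_rank hA, ← card_ker_powMonoidHom_eq_pow_rank hB,
    Nat.card_congr (Subgroup.prodEquiv _ _).toEquiv, Nat.card_prod]

variable (p) in
theorem exists_commGroup_rank_eq (k : ℕ) :
    ∃ (C : Type) (_ : CommGroup C) (_ : Finite C), IsPGroup p C ∧ Group.rank C = k := by
  have : Finite (Multiplicative (ZMod p)) := inferInstanceAs (Finite (ZMod p))
  have hC : ∀ c : Fin k → Multiplicative (ZMod p), c ^ p = 1 :=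
    fun c ↦ funext fun i ↦ ZModModule.char_nsmul_eq_zero p (c i).toAdd
  refine ⟨Fin k → Multiplicative (ZMod p), inferInstance, inferInstance,
    isPGroup_of_pow_eq_one hC, ?_⟩
  apply Nat.pow_right_injective (Fact.out : p.Prime).two_le
  simp [← card_eq_pow_rank hC]

end Rank

section ElementaryAbelian

/-- The ranks of the elementary abelian `p`-subgroups of `G`. The `p`-rank `pRank p G` is the
supremum of this set in `ℕ`, with junk value `0` when the set is unbounded. -/
def elementaryAbelianRanks (p : ℕ) (G : Type*) [Group G] : Set ℕ :=
  {r : ℕ | ∃ E : Subgroup G, (∀ x ∈ E, ∀ y ∈ E, x * y = y * x) ∧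
    (∀ x ∈ E, x ^ p = 1) ∧ Nat.card E = p ^ r}

/-- The `p`-rank of a possibly infinite group, with value `⊤` when the ranks of the elementary
abelian `p`-subgroups are unbounded. -/
noncomputable def ePRank (p : ℕ) (G : Type*) [Group G] : ℕ∞ :=
  ⨆ r ∈ elementaryAbelianRanks p G, (r : ℕ∞)

theorem coe_pRank (p : ℕ) [Fact p.Prime] (G : Type) [Group G] [Finite G] :
    (pRank p G : ℕ∞) = ePRank p G := by
  refine ENat.natCast_sSup ⟨Nat.card G, ?_⟩
  rintro r ⟨E, -, -, hE⟩
  exact (Nat.lt_pow_self (Fact.out : p.Prime).one_lt).le.trans (hE ▸ E.card_le_card_group)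

theorem le_ePRank {p r : ℕ} {G : Type*} [Group G] (hr : r ∈ elementaryAbelianRanks p G) :
    (r : ℕ∞) ≤ ePRank p G :=
  le_iSup₂ (f := fun r (_ : r ∈ elementaryAbelianRanks p G) ↦ (r : ℕ∞)) r hr

variable {p r : ℕ} [Fact p.Prime] {G : Type*} [Group G]

theorem rank_mem_elementaryAbelianRanks {E : Type*} [CommGroup E] [Finite E]
    (hE : ∀ x : E, x ^ p = 1) {f : E →* G} (hf : Injective f) :
    Group.rank E ∈ elementaryAbelianRanks p G := by
  refine ⟨f.range, ?_, ?_, ?_⟩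
  · rintro _ ⟨x, rfl⟩ _ ⟨y, rfl⟩
    rw [← map_mul, mul_comm, map_mul]
  · rintro _ ⟨x, rfl⟩
    rw [← map_pow, hE, map_one]
  · rw [← card_eq_pow_rank hE, Nat.card_congr (f.ofInjective hf).toEquiv]

theorem exists_rank_eq_of_mem_elementaryAbelianRanks (hr : r ∈ elementaryAbelianRanks p G) :
    ∃ (E : Subgroup G) (_ : IsMulCommutative E) (_ : Finite E),
      (∀ x : E, x ^ p = 1) ∧ Group.rank E = r := by
  obtain ⟨E, hcomm, hpow, hcard⟩ := hr
  have hp : p.Prime := Fact.out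
  have : IsMulCommutative E := ⟨⟨fun x y ↦ Subtype.ext (hcomm x x.2 y y.2)⟩⟩
  have : Finite E := Nat.finite_of_card_ne_zero (hcard ▸ pow_ne_zero r hp.ne_zero)
  have hE : ∀ x : E, x ^ p = 1 := fun x ↦ Subtype.ext (hpow x x.2)
  rw [card_eq_pow_rank hE] at hcard
  exact ⟨E, ‹_›, ‹_›, hE, Nat.pow_right_injective hp.two_le hcard⟩

theorem rank_mem_elementaryAbelianRanks_of_isPGroup {A : Type*} [CommGroup A] [Finite A]
    (hA : IsPGroup p A) {f : A →* G} (hf : Injective f) :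
    Group.rank A ∈ elementaryAbelianRanks p G := by
  have hker : ∀ x : (powMonoidHom p : A →* A).ker, x ^ p = 1 := fun x ↦ Subtype.ext x.2
  have hrank : Group.rank (powMonoidHom p : A →* A).ker = Group.rank A := by
    apply Nat.pow_right_injective (Fact.out : p.Prime).two_le
    simp only [← card_eq_pow_rank hker, card_ker_powMonoidHom_eq_pow_rank hA]
  rw [← hrank]
  exact rank_mem_elementaryAbelianRanks hker (f := f.comp (Subgroup.subtype _))
    (hf.comp Subtype.val_injective)

theorem isLowerSet_elementaryAbelianRanks : IsLowerSet (elementaryAbelianRanks p G) := by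
  intro r m hmr hr
  obtain ⟨E, _, _, hE, rfl⟩ := exists_rank_eq_of_mem_elementaryAbelianRanks hr
  obtain ⟨F, hF⟩ := Sylow.exists_subgroup_card_pow_prime (G := E) p
    ((pow_dvd_pow p hmr).trans (card_eq_pow_rank hE).symm.dvd)
  have hpow : ∀ x : F, x ^ p = 1 := fun x ↦ Subtype.ext (hE x)
  rw [card_eq_pow_rank hpow] at hF
  rw [← Nat.pow_right_injective (Fact.out : p.Prime).two_le hF]
  exact rank_mem_elementaryAbelianRanks hpow (f := E.subtype.comp F.subtype)
    (E.subtype_injective.comp F.subtype_injective)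

end ElementaryAbelian

namespace GroupRep

variable {A B H G : Type} [Group A] [Group B] [Group H] [Group G]

/-- The class of a homomorphism in `Rep A G`. -/
def mk (f : A →* G) : GroupRep A G := Quot.mk _ f

theorem mk_surjective : Surjective (mk : (A →* G) → GroupRep A G) := Quot.mk_surjective

theorem map_mk (φ : H →* G) (f : A →* H) : map φ (mk f) = mk (φ.comp f) := rfl

theorem mk_eq_mk_iff {f f' : A →* G} : mk f = mk f' ↔ ∃ g : G, ∀ a, f' a = g * f a * g⁻¹ :=
  Equivalence.quot_mk_eq_iff
    { refl := fun f ↦ ⟨1, by simp⟩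
      symm := fun ⟨g, hg⟩ ↦ ⟨g⁻¹, fun a ↦ by rw [hg]; group⟩
      trans := fun ⟨g, hg⟩ ⟨k, hk⟩ ↦ ⟨k * g, fun a ↦ by rw [hk, hg]; group⟩ } f f'

/-- The common kernel of the homomorphisms in a class of `Rep A G`. -/
def ker : GroupRep A G → Subgroup A :=
  Quot.lift MonoidHom.ker fun f f' ⟨g, hg⟩ ↦ by ext a; simp [MonoidHom.mem_ker, hg]

/-- Restriction `Rep B G → Rep A G` along a homomorphism `A →* B`. -/
def comap (u : A →* B) : GroupRep B G → GroupRep A G :=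
  Quot.map (fun f ↦ f.comp u) fun _ _ ⟨g, hg⟩ ↦ ⟨g, fun a ↦ hg (u a)⟩

theorem map_comap (φ : H →* G) (u : A →* B) (x : GroupRep B H) :
    map φ (comap u x) = comap u (map φ x) := by
  obtain ⟨f, rfl⟩ := mk_surjective x
  rfl

theorem comap_comap_of_leftInverse {i : A →* B} {r : B →* A} (hr : LeftInverse r i)
    (x : GroupRep A G) : comap i (comap r x) = x := by
  obtain ⟨f, rfl⟩ := mk_surjective x
  exact congrArg mk (MonoidHom.ext fun a ↦ congrArg f (hr a))

theorem comap_injective_of_surjective {u : A →* B} (hu : Surjective u) :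
    Injective (comap u : GroupRep B G → GroupRep A G) := by
  intro x y hxy
  obtain ⟨f, rfl⟩ := mk_surjective x
  obtain ⟨f', rfl⟩ := mk_surjective y
  obtain ⟨g, hg⟩ := mk_eq_mk_iff.1 hxy
  exact mk_eq_mk_iff.2 ⟨g, hu.forall.2 hg⟩

theorem exists_comap_mk'_eq {x : GroupRep A G} {N : Subgroup A} [N.Normal] (hN : N ≤ x.ker) :
    ∃ y, comap (QuotientGroup.mk' N) y = x := by
  obtain ⟨f, rfl⟩ := mk_surjective x
  exact ⟨mk (QuotientGroup.lift N f hN), congrArg mk (QuotientGroup.lift_comp_mk' N f hN)⟩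

theorem bijective_map_of_leftInverse {φ : H →* G} {i : A →* B} {r : B →* A}
    (hr : LeftInverse r i) (hB : Bijective (map (A := B) φ)) : Bijective (map (A := A) φ) := by
  refine ⟨fun x y hxy ↦ ?_, fun y ↦ ?_⟩
  · have hcomap : comap r x = comap r y := hB.1 (by rw [map_comap, map_comap, hxy])
    rw [← comap_comap_of_leftInverse hr x, hcomap, comap_comap_of_leftInverse hr]
  · obtain ⟨x, hx⟩ := hB.2 (comap r y)
    exact ⟨comap i x, by rw [map_comap, hx, comap_comap_of_leftInverse hr]⟩

theorem bijective_map_of_quotient_ker {φ : H →* G}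
    (hker : ∀ x : GroupRep A H, (map φ x).ker = x.ker)
    (hquot : ∀ f : A →* G, Bijective (map (A := A ⧸ f.ker) φ)) :
    Bijective (map (A := A) φ) := by
  refine ⟨fun x x' hxx' ↦ ?_, fun y ↦ ?_⟩
  · obtain ⟨f, rfl⟩ := mk_surjective x
    let N := (φ.comp f).ker
    have hx' : N ≤ x'.ker := ((congrArg ker hxx').trans (hker x')).le
    obtain ⟨z, hz⟩ := exists_comap_mk'_eq (N := N) (hker (mk f)).le
    obtain ⟨z', hz'⟩ := exists_comap_mk'_eq hx'
    have hzz' : map φ z = map φ z' := comap_injective_of_surjective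
      (QuotientGroup.mk'_surjective N) (by rw [← map_comap, ← map_comap, hz, hz', hxx'])
    rw [← hz, ← hz', (hquot (φ.comp f)).1 hzz']
  · obtain ⟨f, rfl⟩ := mk_surjective y
    obtain ⟨z, hz⟩ := exists_comap_mk'_eq (x := mk f) (N := f.ker) le_rfl
    obtain ⟨w, rfl⟩ := (hquot f).2 z
    exact ⟨comap _ w, by rw [map_comap, hz]⟩

end GroupRep

/-- The homomorphism `φ : H →* G` induces a bijection `Rep A H → Rep A G` for every finite abelian
`p`-group `A` of rank exactly `n`. -/
def RepBijectiveInRank (p n : ℕ) {H G : Type} [Group H] [Group G] (φ : H →* G) : Prop :=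
  ∀ (A : Type) [Group A] [Finite A], IsPGroup p A → (∀ a b : A, a * b = b * a) →
    genRank A = n → Bijective (GroupRep.map (A := A) φ)

namespace RepBijectiveInRank

open GroupRep

variable {p n r : ℕ} [Fact p.Prime] {A H G : Type} [Group H] [Group G] {φ : H →* G}

theorem bijective_map_of_rank_le [CommGroup A] [Finite A] (hφ : RepBijectiveInRank p n φ)
    (hA : IsPGroup p A) (hrank : Group.rank A ≤ n) : Bijective (map (A := A) φ) := by
  obtain ⟨C, _, _, hC, hCrank⟩ := exists_commGroup_rank_eq p (n - Group.rank A)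
  have hAC : genRank (A × C) = n := by
    rw [genRank_eq_rank, rank_prod_eq_add hA hC, hCrank, Nat.add_sub_cancel' hrank]
  exact bijective_map_of_leftInverse (i := MonoidHom.inl A C) (r := MonoidHom.fst A C)
    (fun _ ↦ rfl) (hφ (A × C) (isPGroup_prod hA hC) mul_comm hAC)

theorem ker_comp [Group A] (hφ : RepBijectiveInRank p n φ) (hn : 1 ≤ n) (hA : IsPGroup p A)
    (f : A →* H) : (φ.comp f).ker = f.ker := by
  refine le_antisymm (fun a ha ↦ ?_) (Subgroup.ker_le_comap f φ.ker)
  let Z := Subgroup.zpowers a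
  have : Finite Z := (hA.isOfFinOrder (Fact.out : p.Prime).ne_zero a).finite_zpowers
  have hZ : Bijective (map (A := Z) φ) :=
    hφ.bijective_map_of_rank_le (hA.to_subgroup Z) ((rank_zpowers_le_one a).trans hn)
  have htrivial : φ.comp (f.comp Z.subtype) = φ.comp (1 : Z →* H) := by
    ext ⟨_, k, rfl⟩
    have hfa : φ (f a) = 1 := ha
    simp [hfa]
  have hclass : mk (f.comp Z.subtype) = mk (1 : Z →* H) := by
    apply hZ.1
    rw [map_mk, map_mk, htrivial]
  have hker : (f.comp Z.subtype).ker = (1 : Z →* H).ker := congrArg ker hclass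
  exact hker.ge (x := ⟨a, Subgroup.mem_zpowers a⟩) rfl

theorem ker_map [Group A] (hφ : RepBijectiveInRank p n φ) (hn : 1 ≤ n) (hA : IsPGroup p A)
    (x : GroupRep A H) : (map φ x).ker = x.ker := by
  obtain ⟨f, rfl⟩ := mk_surjective x
  exact hφ.ker_comp hn hA f

theorem elementaryAbelianRanks_subset (hφ : RepBijectiveInRank p n φ) (hn : 1 ≤ n) :
    elementaryAbelianRanks p H ⊆ elementaryAbelianRanks p G := by
  intro r hr
  obtain ⟨E, _, _, hE, rfl⟩ := exists_rank_eq_of_mem_elementaryAbelianRanks hr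
  refine rank_mem_elementaryAbelianRanks hE (f := φ.comp E.subtype) ?_
  rw [← MonoidHom.ker_eq_bot_iff, hφ.ker_comp hn (isPGroup_of_pow_eq_one hE), E.ker_subtype]

theorem mem_elementaryAbelianRanks (hφ : RepBijectiveInRank p n φ)
    (hr : r ∈ elementaryAbelianRanks p G) (hrn : r ≤ n) : r ∈ elementaryAbelianRanks p H := by
  obtain ⟨E, _, _, hE, rfl⟩ := exists_rank_eq_of_mem_elementaryAbelianRanks hr
  obtain ⟨x, hx⟩ := (hφ.bijective_map_of_rank_le (isPGroup_of_pow_eq_one hE) hrn).2 (mk E.subtype)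
  obtain ⟨f, rfl⟩ := mk_surjective x
  have hker : (φ.comp f).ker = E.subtype.ker := congrArg ker hx
  refine rank_mem_elementaryAbelianRanks hE (f := f) ?_
  rw [← MonoidHom.ker_eq_bot_iff, eq_bot_iff, ← E.ker_subtype, ← hker]
  exact Subgroup.ker_le_comap f φ.ker

theorem le_of_mem_elementaryAbelianRanks (hφ : RepBijectiveInRank p n φ)
    (hmin : min (ePRank p G) (ePRank p H + 1) ≤ n) (hr : r ∈ elementaryAbelianRanks p G) :
    r ≤ n := by
  rcases min_le_iff.1 hmin with hG | hH
  · exact_mod_cast (le_ePRank hr).trans hG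
  · by_contra! hnr
    have hn : n ∈ elementaryAbelianRanks p H :=
      hφ.mem_elementaryAbelianRanks (isLowerSet_elementaryAbelianRanks hnr.le hr) le_rfl
    exact (ENat.add_one_le_natCast_iff.1 hH).not_ge (le_ePRank hn)

theorem bijective_map [CommGroup A] (hφ : RepBijectiveInRank p n φ) (hn : 1 ≤ n)
    (hG : ∀ r ∈ elementaryAbelianRanks p G, r ≤ n) (hA : IsPGroup p A)
    (hfin : ∀ f : A →* G, Finite f.range) : Bijective (map (A := A) φ) := by
  refine bijective_map_of_quotient_ker (hφ.ker_map hn hA) fun f ↦ ?_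
  have : Finite (A ⧸ f.ker) :=
    .of_equiv _ (QuotientGroup.quotientKerEquivRange f).symm.toEquiv
  have hquot : IsPGroup p (A ⧸ f.ker) := hA.to_quotient f.ker
  exact hφ.bijective_map_of_rank_le hquot (hG _
    (rank_mem_elementaryAbelianRanks_of_isPGroup hquot (QuotientGroup.kerLift_injective f)))

end RepBijectiveInRank

theorem rep_bijective_of_rep_bijective_of_rank_eq_general
    (p : ℕ) [Fact p.Prime] (H G : Type) [Group H] [Group G]
    (φ : H →* G) (n : ℕ) (hn : 1 ≤ n) (hmin : min (ePRank p G) (ePRank p H + 1) ≤ n)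
    (hbij : RepBijectiveInRank p n φ) :
    ePRank p G = ePRank p H ∧
      ∀ (A : Type) [Group A], IsPGroup p A → (∀ a b : A, a * b = b * a) →
        (∀ f : A →* G, Finite f.range) → Bijective (GroupRep.map (A := A) φ) := by
  have hG : ∀ r ∈ elementaryAbelianRanks p G, r ≤ n :=
    fun r hr ↦ hbij.le_of_mem_elementaryAbelianRanks hmin hr
  have hranks : elementaryAbelianRanks p G = elementaryAbelianRanks p H :=
    Set.Subset.antisymm (fun r hr ↦ hbij.mem_elementaryAbelianRanks hr (hG r hr))
      (hbij.elementaryAbelianRanks_subset hn)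
  refine ⟨by rw [ePRank, ePRank, hranks], fun A _ hA hcomm hfin ↦ ?_⟩
  have : IsMulCommutative A := ⟨⟨hcomm⟩⟩
  exact hbij.bijective_map hn hG hA hfin

/-- **Bijectivity on `Rep` for one sufficiently large rank implies it for all ranks.**
If `n ≥ 1`, `n ≥ min{rk_p(G), rk_p(H) + 1}`, and `φ : H → G` induces a bijection
`Rep(A,H) → Rep(A,G)` for every finite abelian `p`-group `A` of rank exactly `n`,
then `rk_p(G) = rk_p(H)` and `φ` induces such a bijection for every finite abelian
`p`-group `A`. -/
theorem rep_bijective_of_rep_bijective_of_rank_eq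
    (p : ℕ) [Fact p.Prime] (H G : Type) [Group H] [Group G] [Finite H] [Finite G]
    (φ : H →* G) (n : ℕ) (hn : 1 ≤ n) (hmin : min (pRank p G) (pRank p H + 1) ≤ n)
    (hbij : ∀ (A : Type) [Group A] [Finite A], IsPGroup p A →
      (∀ a b : A, a * b = b * a) → genRank A = n →
      Function.Bijective (GroupRep.map (A := A) φ)) :
    pRank p G = pRank p H ∧
      ∀ (A : Type) [Group A] [Finite A], IsPGroup p A →
        (∀ a b : A, a * b = b * a) →
        Function.Bijective (GroupRep.map (A := A) φ) := by
  obtain ⟨hrank, hrep⟩ := rep_bijective_of_rep_bijective_of_rank_eq_general p H G φ n hn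
    (by rw [min_le_iff, ← coe_pRank, ← coe_pRank]; exact_mod_cast min_le_iff.1 hmin) hbij
  rw [← coe_pRank, ← coe_pRank, ENat.natCast_inj] at hrank
  exact ⟨hrank, fun A _ _ hA hcomm ↦ hrep A hA hcomm fun _ ↦ inferInstance⟩
end
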